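/- For all natural numbers m and n, ∏_{i=1}^{m} ∏_{j=1}^{n} (i+j+1)/(i+j-1) = (1/(m+n+1)) * C(m+n+1, m+1) * C(m+n+1, m). -/

import Mathlib

/-!
Each inner product telescopes in steps of two, to `(i + n) / i * ((i + n + 1) / (i + 1))`.
The products of the two factors over `i` are `C(m+n, m)` and `C(m+n+1, m+1) / (n+1)`, and the
absorption identity `C(m+n, m) / (n+1) = C(m+n+1, m) / (m+n+1)` turns their product into
the right-hand side.
-/

section Field

variable {K : Type*} [Field K]

lemma prod_Icc_add_add_one_div_add_sub_one {a : K} (ha : ∀ k : ℕ, a + k ≠ 0) (n : ℕ) :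
    ∏ j ∈ Finset.Icc 1 n, ((a + j + 1) / (a + j - 1)) =
      (a + n) / a * ((a + n + 1) / (a + 1)) := by
  have ha₀ : a ≠ 0 := by simpa using ha 0
  have ha₁ : a + 1 ≠ 0 := by simpa using ha 1
  induction n with
  | zero => simp [ha₀, ha₁]
  | succ n ih =>
    have han : a + n ≠ 0 := ha n
    have hpred : a + (n + 1) - 1 = a + n := by ring
    rw [Finset.prod_Icc_succ_top n.succ_pos, ih]
    push_cast
    rw [hpred]
    field_simp
    ring

variable [CharZero K]

lemma prod_Icc_add_add_div_add (l m n : ℕ) :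
    ∏ i ∈ Finset.Icc 1 m, (((i : K) + l + n) / (i + l)) =
      ((m + l + n).choose (m + l) : K) / ((l + n).choose l : K) := by
  have choose_ne_zero (k : ℕ) : ((k + n).choose k : K) ≠ 0 :=
    Nat.cast_ne_zero.mpr (Nat.choose_pos (Nat.le_add_right k n)).ne'
  induction m with
  | zero => simp [choose_ne_zero l]
  | succ m ih =>
    have absorption : ((m + l + n + 1 : ℕ) : K) * (m + l + n).choose (m + l) =
        (m + l + n + 1).choose (m + l + 1) * (m + l + 1 : ℕ) := by
      exact_mod_cast Nat.add_one_mul_choose_eq (m + l + n) (m + l)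
    have hden : (m : K) + 1 + l ≠ 0 := by exact_mod_cast (by lia : m + 1 + l ≠ 0)
    have hl := choose_ne_zero l
    rw [Finset.prod_Icc_succ_top m.succ_pos, ih, show m + 1 + l + n = m + l + n + 1 by lia,
      show m + 1 + l = m + l + 1 by lia]
    push_cast at absorption ⊢
    field_simp
    linear_combination absorption

lemma cast_choose_add_div_add_one (m n : ℕ) :
    ((m + n).choose m : K) / (n + 1) = ((m + n + 1).choose m : K) / (m + n + 1) := by
  rw [div_eq_div_iff (Nat.cast_add_one_ne_zero n) (by exact_mod_cast (m + n).succ_ne_zero)]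
  have absorption := Nat.choose_mul_succ_eq (m + n) m
  rw [show m + n + 1 - m = n + 1 by lia] at absorption
  exact_mod_cast absorption

theorem prod_ratio_eq_narayana_form_general (m n : ℕ) :
    (∏ i ∈ Finset.Icc 1 m, ∏ j ∈ Finset.Icc 1 n,
        (((i : K) + j + 1) / ((i : K) + j - 1))) =
      (1 / ((m : K) + n + 1)) * ((m + n + 1).choose (m + 1) : K) *
        ((m + n + 1).choose m : K) := by
  have inner_prod (i : ℕ) (hi : i ∈ Finset.Icc 1 m) :
      ∏ j ∈ Finset.Icc 1 n, (((i : K) + j + 1) / ((i : K) + j - 1)) =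
        ((i : K) + n) / i * (((i : K) + n + 1) / (i + 1)) := by
    have hi_pos := (Finset.mem_Icc.mp hi).1
    refine prod_Icc_add_add_one_div_add_sub_one (fun k => ?_) n
    exact_mod_cast (by lia : i + k ≠ 0)
  have prod_left : ∏ i ∈ Finset.Icc 1 m, (((i : K) + n) / i) = (m + n).choose m := by
    simpa using prod_Icc_add_add_div_add (K := K) 0 m n
  have prod_right : ∏ i ∈ Finset.Icc 1 m, (((i : K) + n + 1) / (i + 1)) =
      (m + n + 1).choose (m + 1) / (n + 1) := by
    simpa [add_right_comm, add_comm 1 n] using prod_Icc_add_add_div_add (K := K) 1 m n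
  rw [Finset.prod_congr rfl inner_prod, Finset.prod_mul_distrib, prod_left, prod_right,
    mul_div_left_comm, cast_choose_add_div_add_one]
  ring

end Field

/-- `∏_{i=1}^{m} ∏_{j=1}^{n} (i+j+1)/(i+j-1) = (1/(m+n+1)) C(m+n+1, m+1) C(m+n+1, m)`. -/
theorem prod_ratio_eq_narayana_form (m n : ℕ) :
    (∏ i ∈ Finset.Icc 1 m, ∏ j ∈ Finset.Icc 1 n,
        (((i : ℚ) + j + 1) / ((i : ℚ) + j - 1))) =
      (1 / ((m : ℚ) + n + 1)) * ((m + n + 1).choose (m + 1) : ℚ) *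
        ((m + n + 1).choose m : ℚ) :=
  prod_ratio_eq_narayana_form_general m n
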